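/- Let m and n be positive composite integers and k a positive integer, and set G_{m,n,k}=(ℤ/mℤ * ℤ/nℤ)×ℤ^{2k}, where * denotes the free product. Then for every i≥1 the group cohomology H^i(G_{m,n,k},ℝ) is isomorphic to H^i(ℤ^{2k},ℝ), and G_{m,n,k} admits a non-degenerate skew structure. -/

import Mathlib

/-!  A formalization framework for "Lefschetz contact manifolds and odd dimensional
symplectic geometry" (Yi Lin).

Mathlib does not yet contain differential forms, de Rham cohomology, or contact /
Sasakian geometry.  We therefore work with a faithful algebraic model:  a `DGA N`
records the graded differential algebra of smooth differential forms on a compact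
oriented `N`-dimensional manifold, together with integration (Stokes' theorem).
Contact, K-contact and Sasakian structures are then extra structure on this algebra:
the contact form `η`, contraction `ι` with the Reeb vector field (with its defining
identities), the averaging operator over the closure of the Reeb flow (a torus of
isometries) characterizing K-contact structures, and the transverse `dᶜ`-operator
with the basic `d dᶜ`-lemma coming from the transversely Kähler structure of a
Sasakian manifold.  -/

noncomputable section

open LinearMap

attribute [local instance] Classical.propDecidable

/-- Model of the de Rham complex of a compact oriented `N`-dimensional manifold:
a graded differential `ℝ`-algebra (`deg k` is the space of smooth `k`-forms, `d` the
exterior differential, multiplication the wedge product), together with integration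
over the manifold, satisfying Stokes' theorem. -/
structure DGA (N : ℕ) where
  /-- the space of all (inhomogeneous) smooth differential forms -/
  Ω : Type
  [ringΩ : Ring Ω]
  [algΩ : Algebra ℝ Ω]
  /-- `deg k` is the space of smooth `k`-forms -/
  deg : ℕ → Submodule ℝ Ω
  one_mem : (1 : Ω) ∈ deg 0
  mul_mem : ∀ {k l : ℕ} {a b : Ω}, a ∈ deg k → b ∈ deg l → a * b ∈ deg (k + l)
  deg_eq_bot : ∀ k : ℕ, N < k → deg k = ⊥
  /-- the exterior differential -/
  d : Ω →ₗ[ℝ] Ω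
  d_mem : ∀ {k : ℕ} {a : Ω}, a ∈ deg k → d a ∈ deg (k + 1)
  d_d : ∀ a : Ω, d (d a) = 0
  d_mul : ∀ {k : ℕ} (a b : Ω), a ∈ deg k →
    d (a * b) = d a * b + ((-1 : ℝ) ^ k) • (a * d b)
  /-- integration over the (compact, oriented) manifold -/
  integral : Ω →ₗ[ℝ] ℝ
  /-- Stokes' theorem -/
  integral_d : ∀ a : Ω, integral (d a) = 0

attribute [instance] DGA.ringΩ DGA.algΩ

namespace DGA

variable {N : ℕ} (A : DGA N)

/-- closed `k`-forms -/
def closed (k : ℕ) : Submodule ℝ A.Ω := A.deg k ⊓ LinearMap.ker A.d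

/-- exact `k`-forms -/
def exact : ℕ → Submodule ℝ A.Ω
  | 0 => ⊥
  | (k + 1) => A.deg (k + 1) ⊓ Submodule.map A.d (A.deg k)

/-- the `k`-th de Rham cohomology group `H^k(M, ℝ)` -/
def H (k : ℕ) : Type :=
  A.closed k ⧸ ((A.exact k).comap (A.closed k).subtype)

instance (k : ℕ) : AddCommGroup (A.H k) :=
  inferInstanceAs (AddCommGroup (A.closed k ⧸ ((A.exact k).comap (A.closed k).subtype)))

instance (k : ℕ) : Module ℝ (A.H k) :=
  inferInstanceAs (Module ℝ (A.closed k ⧸ ((A.exact k).comap (A.closed k).subtype)))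

/-- the de Rham cohomology class of a closed `k`-form (junk value `0` on non-closed
forms) -/
def Hcls (k : ℕ) (a : A.Ω) : A.H k :=
  if h : a ∈ A.closed k then
    (Submodule.Quotient.mk (⟨a, h⟩ : A.closed k) : A.H k)
  else 0

/-- a representative closed form for a de Rham cohomology class -/
def Hrep {k : ℕ} (x : A.H k) : A.closed k :=
  (Submodule.Quotient.mk_surjective ((A.exact k).comap (A.closed k).subtype) x).choose

/-- transport of cohomology along an equality of degrees -/
def castH {k l : ℕ} (h : k = l) : A.H k ≃ₗ[ℝ] A.H l := by
  subst h; exact LinearEquiv.refl ℝ (A.H k)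

/-- the cup product on de Rham cohomology, induced by the wedge product of forms -/
def cup (k l : ℕ) (x : A.H k) (y : A.H l) : A.H (k + l) :=
  A.Hcls (k + l) ((A.Hrep x).1 * (A.Hrep y).1)

/-- integration of a de Rham cohomology class over the manifold -/
def intH {k : ℕ} (x : A.H k) : ℝ := A.integral (A.Hrep x).1

/-- the map induced on de Rham cohomology by a morphism of form algebras
(e.g. the pullback along a smooth map) -/
def mapH {N' : ℕ} (B : DGA N') (f : A.Ω →ₐ[ℝ] B.Ω) (k : ℕ) (x : A.H k) : B.H k :=
  B.Hcls k (f (A.Hrep x).1)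

end DGA

/-! ### Low-degree group cohomology with trivial real coefficients

`H^1(G,ℝ)` is the space of homomorphisms `G → ℝ` and `H^2(G,ℝ)` is defined by
inhomogeneous 2-cocycles modulo coboundaries, together with the cup product
`H^1 × H^1 → H^2` and the notion of a non-degenerate skew structure on a discrete
group in the sense of Johnson–Rees. -/

/-- additive homomorphisms `G → ℝ`; this is the group cohomology `H^1(G, ℝ)` with
trivial coefficients -/
def grpH1 (G : Type) [Group G] : Submodule ℝ (G → ℝ) where
  carrier := {f | ∀ g h : G, f (g * h) = f g + f h}
  add_mem' := by
    intro a b ha hb g h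
    simp only [Pi.add_apply, ha g h, hb g h]; ring
  zero_mem' := by intro g h; simp
  smul_mem' := by
    intro c a ha g h
    simp only [Pi.smul_apply, smul_eq_mul, ha g h]; ring

/-- the group cohomology `H^1(G,ℝ)` with trivial real coefficients -/
def GH1 (G : Type) [Group G] : Type := grpH1 G

instance (G : Type) [Group G] : AddCommGroup (GH1 G) :=
  inferInstanceAs (AddCommGroup (grpH1 G))

instance (G : Type) [Group G] : Module ℝ (GH1 G) :=
  inferInstanceAs (Module ℝ (grpH1 G))

/-- inhomogeneous 2-cocycles on `G` with values in the trivial module `ℝ` -/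
def grpZ2 (G : Type) [Group G] : Submodule ℝ (G → G → ℝ) where
  carrier := {c | ∀ g h j : G, c h j - c (g * h) j + c g (h * j) - c g h = 0}
  add_mem' := by
    intro a b ha hb g h j
    have h1 := ha g h j
    have h2 := hb g h j
    simp only [Pi.add_apply]
    linarith
  zero_mem' := by intro g h j; simp
  smul_mem' := by
    intro c a ha g h j
    have h1 := ha g h j
    simp only [Pi.smul_apply, smul_eq_mul]
    linear_combination c * h1

/-- the coboundary map `(δ f)(g,h) = f(h) - f(gh) + f(g)` -/
def grpδ (G : Type) [Group G] : (G → ℝ) →ₗ[ℝ] (G → G → ℝ) where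
  toFun f := fun g h => f h - f (g * h) + f g
  map_add' := by intro a b; funext g h; simp only [Pi.add_apply]; ring
  map_smul' := by
    intro c a; funext g h
    simp only [Pi.smul_apply, smul_eq_mul, RingHom.id_apply]; ring

/-- inhomogeneous 2-coboundaries -/
def grpB2 (G : Type) [Group G] : Submodule ℝ (G → G → ℝ) := LinearMap.range (grpδ G)

/-- the group cohomology `H^2(G,ℝ)` with trivial real coefficients:
2-cocycles modulo 2-coboundaries -/
def GH2 (G : Type) [Group G] : Type :=
  grpZ2 G ⧸ ((grpB2 G).comap (grpZ2 G).subtype)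

instance (G : Type) [Group G] : AddCommGroup (GH2 G) :=
  inferInstanceAs (AddCommGroup (grpZ2 G ⧸ ((grpB2 G).comap (grpZ2 G).subtype)))

instance (G : Type) [Group G] : Module ℝ (GH2 G) :=
  inferInstanceAs (Module ℝ (grpZ2 G ⧸ ((grpB2 G).comap (grpZ2 G).subtype)))

/-- the cup product `H^1(G,ℝ) × H^1(G,ℝ) → H^2(G,ℝ)`, induced by
`(a ∪ b)(g,h) = a(g)·b(h)` -/
def gcup {G : Type} [Group G] (a b : GH1 G) : GH2 G :=
  Submodule.Quotient.mk (⟨fun g h => a.1 g * b.1 h, by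
    intro g h j
    have ha : ∀ g h : G, a.1 (g * h) = a.1 g + a.1 h := a.2
    have hb : ∀ g h : G, b.1 (g * h) = b.1 g + b.1 h := b.2
    simp only []
    rw [ha g h, hb h j]; ring⟩ : grpZ2 G)

/-- A non-degenerate skew structure on a discrete group `G` (Johnson–Rees):
a non-degenerate skew-symmetric bilinear form on `H^1(G,ℝ)` which factors through
the cup product, i.e. is of the form `⟨a,b⟩ = σ(a ∪ b)` for a linear functional
`σ : H^2(G,ℝ) → ℝ`. -/
def HasNondegSkewStructure (G : Type) [Group G] : Prop :=
  ∃ σ : GH2 G →ₗ[ℝ] ℝ,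
    (∀ a b : GH1 G, σ (gcup a b) = -σ (gcup b a)) ∧
    (∀ a : GH1 G, a ≠ 0 → ∃ b : GH1 G, σ (gcup a b) ≠ 0)

namespace GmnkAux

open CategoryTheory CategoryTheory.Limits

/-- The representation of `L` on all functions `L → V`, by right translation. -/
def funRho (L : Type) [Group L] (V : Type) [AddCommGroup V] [Module ℝ V] :
    Representation ℝ L (L → V) where
  toFun h := LinearMap.funLeft ℝ V (fun x => x * h)
  map_one' := by ext; simp [LinearMap.funLeft]
  map_mul' a b := by ext; simp [LinearMap.funLeft, mul_assoc]

def funRep (L : Type) [Group L] (V : Type) [AddCommGroup V] [Module ℝ V] : Rep.{0} ℝ L :=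
  Rep.of (funRho L V)

/-- The embedding of a representation in the coinduced one. -/
def emb {L : Type} [Group L] (V : Rep.{0} ℝ L) : V ⟶ funRep L V.V :=
  Rep.ofHom (ρ := V.ρ) (σ := funRho L V.V)
    ⟨LinearMap.pi fun h => V.ρ h, fun g => by
      ext v x
      simp [funRho, LinearMap.funLeft]⟩

instance {L : Type} [Group L] (V : Rep.{0} ℝ L) : Mono (emb V) := by
  rw [Rep.mono_iff_injective]
  intro v w h
  have h1 : V.ρ 1 v = V.ρ 1 w := congrFun h (1 : L)
  simpa using h1

noncomputable def sc {L : Type} [Group L] (V : Rep.{0} ℝ L) : ShortComplex (Rep.{0} ℝ L) :=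
  ShortComplex.mk (emb V) (cokernel.π (emb V)) (cokernel.condition _)

lemma sc_exact {L : Type} [Group L] (V : Rep.{0} ℝ L) : (sc V).ShortExact where
  exact := ShortComplex.exact_cokernel _
  mono_f := by dsimp [sc]; infer_instance
  epi_g := by dsimp [sc]; infer_instance

/-- functions on `L`, restricted to `G`, are coinduced from the kernel. -/
noncomputable def resFunIso {G L : Type} [Group G] [Group L] (φ : G →* L)
    (hφ : Function.Surjective φ) (V : Type) [AddCommGroup V] [Module ℝ V] :
    Rep.res φ (funRep L V) ≅ Rep.coind φ.ker.subtype (Rep.trivial ℝ φ.ker V) :=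
  Rep.mkIso (ρ := (funRho L V).comp φ) <| .mk
    (LinearEquiv.ofBijective
      (LinearMap.codRestrict _ (LinearMap.funLeft ℝ V φ) (by
        intro f s h
        have : φ (s : G) = 1 := s.2
        simp [LinearMap.funLeft, this]))
      ⟨by
        intro f f' h
        funext l
        obtain ⟨g, rfl⟩ := hφ l
        exact congrFun (congrArg Subtype.val h) g, by
        rintro ⟨f, hf⟩
        refine ⟨fun l => f (Function.surjInv hφ l), ?_⟩
        apply Subtype.ext
        funext g
        have h1 : φ (g * (Function.surjInv hφ (φ g))⁻¹) = 1 := by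
          simp [Function.surjInv_eq hφ]
        have h2 := hf ⟨g * (Function.surjInv hφ (φ g))⁻¹, h1⟩ (Function.surjInv hφ (φ g))
        simpa [LinearMap.funLeft] using h2.symm⟩)
    fun h => by
      ext f x
      simp [funRho, LinearMap.funLeft]

/-- vanishing on trivial modules -/
def Acyc (S : Type) [Group S] : Prop :=
  ∀ (V : Type) [AddCommGroup V] [Module ℝ V] (i : ℕ),
    IsZero (groupCohomology (Rep.trivial ℝ S V) (i + 1))

lemma isZero_resFun {G L : Type} [Group G] [Group L] (φ : G →* L)
    (hφ : Function.Surjective φ) (hS : Acyc φ.ker) (V : Type) [AddCommGroup V] [Module ℝ V]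
    (i : ℕ) : IsZero (groupCohomology (Rep.res φ (funRep L V)) (i + 1)) :=
  (hS V i).of_iso
    (((groupCohomology.functor ℝ G (i + 1)).mapIso (resFunIso φ hφ V)) ≪≫
      groupCohomology.coindIso (Rep.trivial ℝ φ.ker V) (i + 1))

lemma acyc_of_subsingleton (S : Type) [Group S] [Subsingleton S] : Acyc S := fun _ _ _ _ =>
  isZero_groupCohomology_succ_of_subsingleton _ _

lemma isZero_fun (L : Type) [Group L] (V : Type) [AddCommGroup V] [Module ℝ V]
    (i : ℕ) : IsZero (groupCohomology (funRep L V) (i + 1)) := by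
  have : Subsingleton (MonoidHom.id L).ker := by
    constructor
    rintro ⟨a, ha⟩ ⟨b, hb⟩
    apply Subtype.ext
    exact (show a = 1 from ha).trans (show b = 1 from hb).symm
  exact isZero_resFun (MonoidHom.id L) Function.surjective_id (acyc_of_subsingleton _) V i

lemma hom_zero_of_acyc {S : Type} [Group S] (hS : Acyc S) (V : Type) [AddCommGroup V] [Module ℝ V]
    (f : S → V) (hf : ∀ a b, f (a * b) = f a + f b) : f = 0 := by
  let A := Rep.trivial ℝ S V
  have hc : f ∈ groupCohomology.cocycles₁ A := by
    rw [groupCohomology.mem_cocycles₁_iff]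
    intro g h
    rw [hf]
    simp [A, add_comm]
  have h0 : groupCohomology.H1π A ⟨f, hc⟩ = 0 := by
    have := (ModuleCat.isZero_iff_subsingleton.1 (hS V 0))
    exact Subsingleton.elim _ _
  rw [groupCohomology.H1π_eq_zero_iff] at h0
  obtain ⟨y, hy⟩ := h0
  funext g
  have h1 : f g = y - y := (congrFun hy g).symm
  rw [h1, sub_self]
  rfl

lemma base {G L : Type} [Group G] [Group L] (φ : G →* L)
    (hφ : Function.Surjective φ) (hS : Acyc φ.ker) (V : Rep.{0} ℝ L) :
    Nonempty (groupCohomology (Rep.res φ V) 1 ≃ₗ[ℝ] groupCohomology V 1) := by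
  refine ⟨(LinearEquiv.ofBijective
    (groupCohomology.map φ (𝟙 (Rep.res φ V)) 1).hom ⟨?_, ?_⟩).symm⟩
  · rw [injective_iff_map_eq_zero]
    intro x
    induction x using groupCohomology.H1_induction_on with | h x
    intro hx
    rw [groupCohomology.H1π_comp_map_apply, groupCohomology.H1π_eq_zero_iff] at hx
    obtain ⟨y, hy⟩ := hx
    rw [groupCohomology.H1π_eq_zero_iff]
    refine ⟨y, ?_⟩
    funext l
    obtain ⟨g, rfl⟩ := hφ l
    exact congrFun hy g
  · intro x
    induction x using groupCohomology.H1_induction_on with | h x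
    have hx := (groupCohomology.mem_cocycles₁_iff (A := Rep.res φ V) x).1 x.2
    have h0 : ∀ s : G, φ s = 1 → x s = 0 := by
      intro s hs
      have := hom_zero_of_acyc hS V.V (fun s => x s.1) (by
        intro a b
        have ha : φ a.1 = 1 := a.2
        have := hx a.1 b.1
        simpa [ha, add_comm] using this)
      exact congrFun this ⟨s, hs⟩
    have h1 : ∀ g g', φ g = φ g' → x g = x g' := by
      intro g g' h
      have h2 := hx g' (g'⁻¹ * g)
      rw [h0 (g'⁻¹ * g) (by simp [h])] at h2
      simpa using h2
    let z : L → V.V := fun l => x (Function.surjInv hφ l)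
    have hz : ∀ g, z (φ g) = x g := fun g => h1 _ _ (Function.surjInv_eq hφ _)
    have hzc : z ∈ groupCohomology.cocycles₁ V := by
      rw [groupCohomology.mem_cocycles₁_iff]
      intro a b
      obtain ⟨a, rfl⟩ := hφ a
      obtain ⟨b, rfl⟩ := hφ b
      rw [← map_mul, hz, hz, hz]
      exact hx a b
    refine ⟨groupCohomology.H1π V ⟨z, hzc⟩, ?_⟩
    rw [groupCohomology.H1π_comp_map_apply]
    congr 1
    apply groupCohomology.cocycles₁_ext
    intro g
    exact hz g

theorem thmA {G L : Type} [Group G] [Group L] (φ : G →* L)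
    (hφ : Function.Surjective φ) (hS : Acyc φ.ker) (i : ℕ) : ∀ (V : Rep.{0} ℝ L),
    Nonempty (groupCohomology (Rep.res φ V) (i + 1) ≃ₗ[ℝ] groupCohomology V (i + 1)) := by
  induction i with
  | zero => exact base φ hφ hS
  | succ i ih =>
    intro V
    obtain ⟨e⟩ := ih (sc V).X₃
    have hL := sc_exact V
    have hG := (Rep.shortExact_res φ).2 hL
    have i1 := groupCohomology.isIso_δ_of_isZero hL (i + 1) (isZero_fun L V.V i)
      (isZero_fun L V.V (i + 1))
    have i2 := groupCohomology.isIso_δ_of_isZero hG (i + 1) (isZero_resFun φ hφ hS V.V i)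
      (isZero_resFun φ hφ hS V.V (i + 1))
    exact ⟨(asIso (groupCohomology.δ hG (i + 1) (i + 1 + 1) rfl)).toLinearEquiv.symm ≪≫ₗ e ≪≫ₗ
      (asIso (groupCohomology.δ hL (i + 1) (i + 1 + 1) rfl)).toLinearEquiv⟩

/-- a cocycle on a finite group is principal (real coefficients). -/
lemma finite_principal {A : Type} [Group A] [Finite A] {V : Type} [AddCommGroup V] [Module ℝ V]
    (ρ : Representation ℝ A V) (z : A → V) (hz : ∀ a b, z (a * b) = ρ a (z b) + z a) :
    ∃ q : V, ∀ a, z a = ρ a q - q := by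
  have := Fintype.ofFinite A
  have hc : (Fintype.card A : ℝ) ≠ 0 := by
    exact_mod_cast Fintype.card_ne_zero
  refine ⟨-((Fintype.card A : ℝ)⁻¹ • ∑ b, z b), fun a => ?_⟩
  have h1 : ∑ b, z b = ρ a (∑ b, z b) + (Fintype.card A : ℝ) • z a := by
    rw [map_sum, ← Equiv.sum_comp (Equiv.mulLeft a)]
    simp only [Equiv.coe_mulLeft, hz, Finset.sum_add_distrib, Finset.sum_const, Finset.card_univ]
    rw [Nat.cast_smul_eq_nsmul]
  have h2 : (Fintype.card A : ℝ) • z a = (∑ b, z b) - ρ a (∑ b, z b) := by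
    rw [eq_sub_iff_add_eq, add_comm]; exact h1.symm
  have h3 : z a = (Fintype.card A : ℝ)⁻¹ • ((∑ b, z b) - ρ a (∑ b, z b)) := by
    rw [← h2, smul_smul, inv_mul_cancel₀ hc, one_smul]
  rw [h3, map_neg, map_smul, smul_sub]
  abel

/-- `S` is a free product of `A` and `B`. -/
structure IsFP {A B S : Type} [Group A] [Group B] [Group S] (iA : A →* S) (iB : B →* S) : Prop where
  lift : ∀ (H : Type) [Group H] (f : A →* H) (g : B →* H),
    ∃ φ : S →* H, (∀ a, φ (iA a) = f a) ∧ ∀ b, φ (iB b) = g b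
  gen : ∀ P : Subgroup S, (∀ a, iA a ∈ P) → (∀ b, iB b ∈ P) → ∀ s, s ∈ P

/-- affine lifts of a cocycle -/
def affSub {S C Q : Type} [Group S] [AddCommGroup C] [Module ℝ C] [AddCommGroup Q] [Module ℝ Q]
    (ρ : Representation ℝ S C) (τ : Representation ℝ S Q) (g : C →ₗ[ℝ] Q)
    (hg : ∀ s c, g (ρ s c) = τ s (g c)) (z : S → Q) (hz : ∀ a b, z (a * b) = τ a (z b) + z a) :
    Subgroup (Equiv.Perm C × S) where
  carrier := {p | (∀ x, p.1 x = ρ p.2 x + p.1 0) ∧ g (p.1 0) = z p.2}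
  one_mem' := by
    have h1 := hz 1 1
    simp at h1
    simp [h1]
  mul_mem' := by
    rintro ⟨p, s⟩ ⟨p', s'⟩ ⟨h1, h2⟩ ⟨h1', h2'⟩
    simp only at h1 h2 h1' h2'
    refine ⟨fun x => ?_, ?_⟩
    · simp only [Prod.mk_mul_mk, Equiv.Perm.coe_mul, Function.comp_apply, map_mul,
        Module.End.mul_apply]
      rw [h1 (p' x), h1 (p' 0), h1' x, map_add]
      abel
    · simp only [Prod.mk_mul_mk, Equiv.Perm.coe_mul, Function.comp_apply]
      rw [h1, map_add, hg, h2, h2', hz]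
  inv_mem' := by
    rintro ⟨p, s⟩ ⟨h1, h2⟩
    simp only at h1 h2
    have h3 : ∀ x, p⁻¹ x = ρ s⁻¹ (x - p 0) := by
      intro x
      rw [Equiv.Perm.inv_eq_iff_eq, h1]
      simp
    refine ⟨fun x => ?_, ?_⟩
    · simp only [Prod.fst_inv, Prod.snd_inv]
      rw [h3, h3, zero_sub, map_sub, map_neg]
      abel
    · simp only [Prod.fst_inv, Prod.snd_inv]
      rw [h3, hg, zero_sub, map_neg, h2, map_neg]
      have h4 := hz s⁻¹ s
      have h5 := hz 1 1
      simp at h5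
      rw [inv_mul_cancel, h5] at h4
      exact neg_eq_of_add_eq_zero_right h4.symm

/-- translate-conjugated action -/
def conjHom {A C : Type} [Group A] [AddCommGroup C] [Module ℝ C]
    (ρ : Representation ℝ A C) (c : C) : A →* Equiv.Perm C where
  toFun a :=
    { toFun := fun x => ρ a (x + c) - c
      invFun := fun x => ρ a⁻¹ (x + c) - c
      left_inv := fun x => by simp
      right_inv := fun x => by simp }
  map_one' := by ext; simp
  map_mul' a b := by ext; simp

lemma lift_cocycle {A B S : Type} [Group A] [Group B] [Group S] [Finite A] [Finite B]
    {iA : A →* S} {iB : B →* S} (h : IsFP iA iB)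
    {C Q : Type} [AddCommGroup C] [Module ℝ C] [AddCommGroup Q] [Module ℝ Q]
    (ρ : Representation ℝ S C) (τ : Representation ℝ S Q) (g : C →ₗ[ℝ] Q)
    (hsurj : Function.Surjective g)
    (hg : ∀ s c, g (ρ s c) = τ s (g c)) (z : S → Q) (hz : ∀ a b, z (a * b) = τ a (z b) + z a) :
    ∃ y : S → C, (∀ a b, y (a * b) = ρ a (y b) + y a) ∧ ∀ s, g (y s) = z s := by
  have key : ∀ (D : Type) [Group D] [Finite D] (i : D →* S), ∃ f : D →* affSub ρ τ g hg z hz,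
      ∀ d, (f d).1.2 = i d := by
    intro D _ _ i
    obtain ⟨q, hq⟩ := finite_principal (τ.comp i) (fun d => z (i d)) (by
      intro a b; simp [hz])
    obtain ⟨c, rfl⟩ := hsurj q
    refine ⟨MonoidHom.codRestrict ((conjHom (ρ.comp i) c).prod i) _ ?_, fun d => rfl⟩
    intro d
    refine ⟨fun x => ?_, ?_⟩
    · simp only [conjHom, MonoidHom.prod_apply, MonoidHom.coe_mk, OneHom.coe_mk, Equiv.coe_fn_mk,
        MonoidHom.comp_apply]
      rw [map_add, zero_add]
      abel
    · have := hq d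
      simp only [MonoidHom.comp_apply] at this
      simp only [conjHom, MonoidHom.prod_apply, MonoidHom.coe_mk, OneHom.coe_mk, Equiv.coe_fn_mk,
        MonoidHom.comp_apply]
      rw [zero_add, map_sub, hg, this]
  obtain ⟨fA, hA⟩ := key A iA
  obtain ⟨fB, hB⟩ := key B iB
  obtain ⟨Φ, h1, h2⟩ := h.lift _ fA fB
  have h3 : ∀ s, (Φ s).1.2 = s := by
    have := h.gen (MonoidHom.eqLocus
      ((MonoidHom.snd (Equiv.Perm C) S).comp ((affSub ρ τ g hg z hz).subtype.comp Φ))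
      (MonoidHom.id S)) (fun a => by
        change (Φ (iA a)).1.2 = iA a
        rw [h1, hA]) (fun a => by
        change (Φ (iB a)).1.2 = iB a
        rw [h2, hB])
    exact this
  refine ⟨fun s => (Φ s).1.1 0, fun a b => ?_, fun s => ?_⟩
  · have := (Φ a).2.1 ((Φ b).1.1 0)
    rw [h3] at this
    change (Φ (a * b)).1.1 0 = _
    rw [map_mul]
    exact this
  · have := (Φ s).2.2
    rw [h3] at this
    exact this

lemma isZero_H2 {A B S : Type} [Group A] [Group B] [Group S] [Finite A] [Finite B]
    {iA : A →* S} {iB : B →* S} (h : IsFP iA iB) (M : Rep.{0} ℝ S) :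
    IsZero (groupCohomology M 2) := by
  have hX := sc_exact M
  have hepi := groupCohomology.epi_δ_of_isZero hX 1 (isZero_fun S M.V 1)
  have hsurj := (Rep.epi_iff_surjective _).1 hX.epi_g
  have h0 : groupCohomology.δ hX 1 2 rfl = 0 := by
    ext w
    induction w using groupCohomology.H1_induction_on with | h z
    obtain ⟨y, hy, hyz⟩ := lift_cocycle h (sc M).X₂.ρ (sc M).X₃.ρ (sc M).g.hom.toLinearMap hsurj
      (fun s c => Rep.hom_comm_apply _ _ _) z
      ((groupCohomology.mem_cocycles₁_iff (A := (sc M).X₃) z).1 z.2)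
    have hyc : y ∈ groupCohomology.cocycles₁ (sc M).X₂ :=
      (groupCohomology.mem_cocycles₁_iff (A := (sc M).X₂) y).2 hy
    have := groupCohomology.δ₁_apply hX z y (funext hyz) 0 (by
      refine Eq.trans ?_ (groupCohomology.cocycles₁.d₁₂_apply ⟨y, hyc⟩).symm
      funext p
      exact map_zero _)
    refine this.trans ?_
    exact map_zero (groupCohomology.H2π (sc M).X₁).hom
  have hepi2 : Epi (groupCohomology.δ hX 1 2 rfl) := hepi
  have hz : IsZero (groupCohomology (sc M).X₁ 2) :=
    IsZero.of_epi_eq_zero (groupCohomology.δ hX 1 2 rfl) h0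
  exact hz

lemma isZero_Hge2 {A B S : Type} [Group A] [Group B] [Group S] [Finite A] [Finite B]
    {iA : A →* S} {iB : B →* S} (h : IsFP iA iB) (i : ℕ) : ∀ (M : Rep.{0} ℝ S),
    IsZero (groupCohomology M (i + 2)) := by
  induction i with
  | zero => exact isZero_H2 h
  | succ i ih =>
    intro M
    have i1 := groupCohomology.isIso_δ_of_isZero (sc_exact M) (i + 2) (isZero_fun S M.V (i + 1))
      (isZero_fun S M.V (i + 2))
    exact (ih (sc M).X₃).of_iso (asIso (groupCohomology.δ (sc_exact M) (i + 2) _ rfl)).symm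

lemma hom_zero_of_FP {A B S : Type} [Group A] [Group B] [Group S] [Finite A] [Finite B]
    {iA : A →* S} {iB : B →* S} (h : IsFP iA iB) {V : Type} [AddCommGroup V] [Module ℝ V]
    (f : S → V) (hf : ∀ a b, f (a * b) = f a + f b) (s : S) : f s = 0 := by
  have key : ∀ (D : Type) [Group D] [Finite D] (i : D →* S) (d : D), f (i d) = 0 := by
    intro D _ _ i d
    obtain ⟨q, hq⟩ := finite_principal (Representation.trivial ℝ D V) (fun d => f (i d)) (by
      intro a b; simp [hf, add_comm])
    simpa using hq d
  have h1 : f 1 = 0 := by simpa using hf 1 1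
  exact h.gen
    { carrier := {s | f s = 0}
      one_mem' := h1
      mul_mem' := by
        intro a b ha hb
        have ha : f a = 0 := ha
        have hb : f b = 0 := hb
        simp [hf, ha, hb]
      inv_mem' := by
        intro a ha
        have ha : f a = 0 := ha
        have := hf a a⁻¹
        simpa [h1, ha] using this.symm } (key A iA) (key B iB) s

lemma acyc_of_FP {A B S : Type} [Group A] [Group B] [Group S] [Finite A] [Finite B]
    {iA : A →* S} {iB : B →* S} (h : IsFP iA iB) : Acyc S := by
  intro V _ _ i
  cases i with
  | succ i => exact isZero_Hge2 h i _
  | zero =>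
    apply ModuleCat.isZero_of_iff_subsingleton.2
    refine subsingleton_of_forall_eq 0 fun x => ?_
    induction x using groupCohomology.H1_induction_on with | h z
    have : z = 0 := by
      apply groupCohomology.cocycles₁_ext
      intro g
      exact hom_zero_of_FP h (V := V) (fun g => z g)
        (fun a b => groupCohomology.cocycles₁_map_mul_of_isTrivial z a b) g
    rw [this]
    exact map_zero (groupCohomology.H1π _).hom

/-- the kernel of the second projection from `(A * B) × L`. -/
lemma isFP_ker (A B L : Type) [Group A] [Group B] [Group L] :
    ∃ (iA : A →* (MonoidHom.snd (Monoid.Coprod A B) L).ker)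
      (iB : B →* (MonoidHom.snd (Monoid.Coprod A B) L).ker), IsFP iA iB := by
  let j : Monoid.Coprod A B →* (MonoidHom.snd (Monoid.Coprod A B) L).ker :=
    MonoidHom.codRestrict (MonoidHom.inl _ _) _ (fun x => rfl)
  have hj : Function.Surjective j := by
    rintro ⟨⟨x, l⟩, hl⟩
    have hl : l = 1 := hl
    subst hl
    exact ⟨x, rfl⟩
  refine ⟨j.comp Monoid.Coprod.inl, j.comp Monoid.Coprod.inr, ?_, ?_⟩
  · intro H _ f g
    refine ⟨((Monoid.Coprod.lift f g).comp (MonoidHom.fst _ L)).comp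
      (MonoidHom.snd (Monoid.Coprod A B) L).ker.subtype, fun a => ?_, fun b => ?_⟩
    · exact Monoid.Coprod.lift_apply_inl f g a
    · exact Monoid.Coprod.lift_apply_inr f g b
  · intro P hA hB s
    obtain ⟨x, rfl⟩ := hj s
    change x ∈ P.comap j
    induction x using Monoid.Coprod.induction_on with
    | inl a => exact hA a
    | inr b => exact hB b
    | mul x y hx hy => exact mul_mem hx hy

lemma two_cocycle_pair {G : Type} [Group G] (u v : G) (huv : u * v = v * u) (c : grpZ2 G)
    (hc : c ∈ (grpB2 G).comap (grpZ2 G).subtype) : c.1 u v - c.1 v u = 0 := by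
  obtain ⟨f, hf⟩ := hc
  have h1 : c.1 u v = f v - f (u * v) + f u := (congrFun (congrFun hf u) v).symm
  have h2 : c.1 v u = f u - f (v * u) + f v := (congrFun (congrFun hf v) u).symm
  rw [h1, h2, huv]; ring

theorem skew {A B : Type} [Group A] [Group B] [Finite A] [Finite B] (k : ℕ) :
    HasNondegSkewStructure (Monoid.Coprod A B × Multiplicative (Fin (2 * k) → ℤ)) := by
  set G := Monoid.Coprod A B × Multiplicative (Fin (2 * k) → ℤ) with hG
  let e : Fin (2 * k) → G := fun i => (1, Multiplicative.ofAdd (Pi.single i 1))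
  let p : Fin k → Fin (2 * k) := fun j => ⟨2 * j.1, by omega⟩
  let q : Fin k → Fin (2 * k) := fun j => ⟨2 * j.1 + 1, by omega⟩
  have hcomm : ∀ i j, e i * e j = e j * e i := by
    intro i j
    exact Prod.ext rfl (mul_comm (e i).2 (e j).2)
  let σ0 : grpZ2 G →ₗ[ℝ] ℝ :=
    { toFun := fun c => ∑ j : Fin k, (c.1 (e (p j)) (e (q j)) - c.1 (e (q j)) (e (p j)))
      map_add' := by
        intro a b
        rw [← Finset.sum_add_distrib]
        refine Finset.sum_congr rfl fun j _ => ?_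
        simp only [Submodule.coe_add, Pi.add_apply]; ring
      map_smul' := by
        intro r a
        simp only [RingHom.id_apply, smul_eq_mul]
        rw [Finset.mul_sum]
        refine Finset.sum_congr rfl fun j _ => ?_
        simp only [Submodule.coe_smul, Pi.smul_apply, smul_eq_mul]; ring }
  let σ : GH2 G →ₗ[ℝ] ℝ := Submodule.liftQ ((grpB2 G).comap (grpZ2 G).subtype) σ0 (by
    intro c hc
    change ∑ j : Fin k, (c.1 (e (p j)) (e (q j)) - c.1 (e (q j)) (e (p j))) = 0
    exact Finset.sum_eq_zero fun j _ => two_cocycle_pair _ _ (hcomm _ _) c hc)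
  have hσ : ∀ a b : GH1 G, σ (gcup a b) =
      ∑ j : Fin k, (a.1 (e (p j)) * b.1 (e (q j)) - a.1 (e (q j)) * b.1 (e (p j))) :=
    fun a b => rfl
  refine ⟨σ, fun a b => ?_, fun a ha => ?_⟩
  · rw [hσ, hσ, ← Finset.sum_neg_distrib]
    exact Finset.sum_congr rfl fun j _ => by ring
  · have hadd : ∀ g h : G, a.1 (g * h) = a.1 g + a.1 h := a.2
    -- some value on a basis vector is nonzero
    have hex : ∃ i, a.1 (e i) ≠ 0 := by
      by_contra hcon
      push Not at hcon
      apply ha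
      apply Subtype.ext
      funext g
      obtain ⟨x, l⟩ := g
      obtain ⟨iA, iB, hFP⟩ := isFP_ker A B (Multiplicative (Fin (2 * k) → ℤ))
      have h1 : a.1 ((x, 1) : G) = 0 :=
        hom_zero_of_FP hFP (V := ℝ) (fun s => a.1 s.1) (fun s t => hadd _ _) ⟨(x, 1), rfl⟩
      let F : (Fin (2 * k) → ℤ) →+ ℝ :=
        { toFun := fun v => a.1 ((1, Multiplicative.ofAdd v) : G)
          map_zero' := by
            have := hadd 1 1
            rw [mul_one] at this
            exact left_eq_add.1 this
          map_add' := by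
            intro v w
            rw [← hadd]
            congr 1
            }
      have hF : F = 0 := by
        apply AddMonoidHom.functions_ext'
        intro i
        ext
        exact hcon i
      have h2 : a.1 ((1, l) : G) = 0 := DFunLike.congr_fun hF (Multiplicative.toAdd l)
      have h3 : ((x, l) : G) = (x, 1) * (1, l) := by simp
      rw [h3, hadd, h1, h2, add_zero]
      rfl
    obtain ⟨i, hi⟩ := hex
    let coord : Fin (2 * k) → GH1 G := fun t =>
      ⟨fun g => ((Multiplicative.toAdd g.2 t : ℤ) : ℝ), fun g h =>
        Int.cast_add (Multiplicative.toAdd g.2 t) (Multiplicative.toAdd h.2 t)⟩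
    have hcoord : ∀ t s, (coord t).1 (e s) = if t = s then 1 else 0 := by
      intro t s
      simp only [coord, e, toAdd_ofAdd, Pi.single_apply]
      split_ifs <;> simp
    let j : Fin k := ⟨i.1 / 2, by omega⟩
    rcases Nat.even_or_odd' i.1 with ⟨c, hc | hc⟩
    · have hij : i = p j := Fin.ext (by simp only [p, j]; omega)
      refine ⟨coord (q j), ?_⟩
      rw [hσ, Finset.sum_eq_single j]
      · rw [hcoord, hcoord, if_pos rfl, if_neg (by simp [p, q, Fin.ext_iff])]
        rw [← hij]; simpa using hi
      · intro t _ ht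
        have ht : t.1 ≠ j.1 := fun h => ht (Fin.ext h)
        rw [hcoord, hcoord, if_neg (by simp only [p, q, Fin.ext_iff]; omega),
          if_neg (by simp only [p, q, Fin.ext_iff]; omega)]
        simp
      · simp
    · have hij : i = q j := Fin.ext (by simp only [q, j]; omega)
      refine ⟨coord (p j), ?_⟩
      rw [hσ, Finset.sum_eq_single j]
      · rw [hcoord, hcoord, if_pos rfl, if_neg (by simp [p, q, Fin.ext_iff])]
        rw [← hij]; simpa using hi
      · intro t _ ht
        have ht : t.1 ≠ j.1 := fun h => ht (Fin.ext h)
        rw [hcoord, hcoord, if_neg (by simp only [p, q, Fin.ext_iff]; omega),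
          if_neg (by simp only [p, q, Fin.ext_iff]; omega)]
        simp
      · simp

end GmnkAux

/-- Let `m` and `n` be positive composite integers and `k` a positive integer, and
set `G_{m,n,k} = (ℤ/mℤ * ℤ/nℤ) × ℤ^{2k}`, where `*` denotes the free product.
Then for every `i ≥ 1` the group cohomology `H^i(G_{m,n,k}, ℝ)` is isomorphic to
`H^i(ℤ^{2k}, ℝ)`, and `G_{m,n,k}` admits a non-degenerate skew structure. -/
theorem groupCohomology_of_Gmnk_and_skew_structure
    (m n k : ℕ)
    (hm : ∃ a b : ℕ, 2 ≤ a ∧ 2 ≤ b ∧ m = a * b)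
    (hn : ∃ a b : ℕ, 2 ≤ a ∧ 2 ≤ b ∧ n = a * b)
    (hk : 1 ≤ k) :
    (∀ i : ℕ, 1 ≤ i →
      Nonempty
        ((groupCohomology
            (Rep.trivial ℝ
              ((Monoid.Coprod (Multiplicative (ZMod m)) (Multiplicative (ZMod n))) ×
                Multiplicative (Fin (2 * k) → ℤ)) ℝ) i) ≃ₗ[ℝ]
          (groupCohomology
            (Rep.trivial ℝ (Multiplicative (Fin (2 * k) → ℤ)) ℝ) i))) ∧
    HasNondegSkewStructure
      ((Monoid.Coprod (Multiplicative (ZMod m)) (Multiplicative (ZMod n))) ×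
        Multiplicative (Fin (2 * k) → ℤ)) := by
  obtain ⟨a, b, ha, hb, rfl⟩ := hm
  obtain ⟨c, d, hc, hd, rfl⟩ := hn
  have : NeZero (a * b) := ⟨by positivity⟩
  have : NeZero (c * d) := ⟨by positivity⟩
  have : Finite (Multiplicative (ZMod (a * b))) := inferInstanceAs (Finite (ZMod (a * b)))
  have : Finite (Multiplicative (ZMod (c * d))) := inferInstanceAs (Finite (ZMod (c * d)))
  refine ⟨fun i hi => ?_, GmnkAux.skew k⟩
  obtain ⟨i, rfl⟩ : ∃ j, i = j + 1 := ⟨i - 1, by omega⟩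
  obtain ⟨iA, iB, hFP⟩ := GmnkAux.isFP_ker (Multiplicative (ZMod (a * b)))
    (Multiplicative (ZMod (c * d))) (Multiplicative (Fin (2 * k) → ℤ))
  exact GmnkAux.thmA (MonoidHom.snd _ _) Prod.snd_surjective (GmnkAux.acyc_of_FP hFP) i
    (Rep.trivial ℝ (Multiplicative (Fin (2 * k) → ℤ)) ℝ)
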